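/- Let p be an odd prime, let d be a positive integer with d > (p−1)/2, and let ρ₁, ρ₂, …, ρ_{(p−1)/2} be metrics on ℝᵈ each of which induces the standard (Euclidean) topology of ℝᵈ. Then there exist p distinct points x₀, x₁, …, x_{p−1} in ℝᵈ, indexed by 𝔽_p, such that for every t ∈ {1, 2, …, (p−1)/2} the p-gon C_t is ρ_t-equilateral. -/

import Mathlib

/-- `ρ` is a metric on `E` that induces the (given) standard topology of `E`. -/
def IsMetricEquivToStd {E : Type*} [TopologicalSpace E] (ρ : E → E → ℝ) : Prop :=
  (∀ x y, ρ x y = ρ y x) ∧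
  (∀ x y, ρ x y = 0 ↔ x = y) ∧
  (∀ x y z, ρ x z ≤ ρ x y + ρ y z) ∧
  (∀ s : Set E, IsOpen s ↔ ∀ x ∈ s, ∃ ε > 0, {y | ρ x y < ε} ⊆ s)

/-!
The theorem reduces to a Borsuk–Ulam theorem for the cyclic shift of configurations
`x : ZMod p → V`: given fewer than `dim V` continuous functions, some nonconstant configuration has
each of them constant on its orbit. Applied to the edge lengths `ρ t (x 0) (x t)`, this makes every
`C_t` equilateral, and equilateral polygons with two equal vertices collapse to a point.

For `r` functions put `N = r (p - 1)`. The configurations range over sets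
`X 0 ⊆ X 1 ⊆ ⋯ ⊆ X N`, each contractible in the next, inside the join of `r + 1` copies of the
simplex on `ZMod p`. Their points have fewer than `p` nonzero entries in each factor, hence are not
constant. If on every orbit in `X N` some function varied, it would have a strict superlevel set
along the orbit; the size of this set is invertible modulo `p`, so it has a centre of mass in
`ZMod p`. Recording the function, the size and the centre labels `X N` by `N` colours and a phase in
`ZMod p`; the shift translates the phase, and nearby points of the same colour have the same phase.

Such labels are ruled out by a Tucker-type argument modulo `p`. Let `T n` be alternately `1 - s` and
`1 + s + ⋯ + s ^ (p - 1)`, so that consecutive products vanish. Successive contractions yield chains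
`h n` of small simplices in `X n` with `∂ (h (n + 1)) = T n (h n)`. There are cochains `φ n` on
simplices of labels with `φ (n + 1) = ψ n ∘ ∂` and `ψ n ∘ T n = φ n`, so that
`φ (n + 1) (h (n + 1)) = φ n (h n) = ⋯ = 1`. But `φ N` is alternating and a simplex with `N + 1`
labels in `N` colours has a repeated label, so `φ N = 0`.
-/

/-- Chains of the ordered simplicial complex on the vertex set `E`: a list of `n` vertices is an
ordered simplex of dimension `n - 1`, with the empty list in dimension `-1`. -/
abbrev ListChain (R E : Type*) [Semiring R] := List E →₀ R

namespace ListChain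

open Finsupp

variable {R : Type*} [Ring R] {E F : Type*}

/-- The cone operator, prepending the apex `x` to every simplex. -/
noncomputable def cone (x : E) : ListChain R E →ₗ[R] ListChain R E :=
  lmapDomain R R (List.cons x)

/-- The boundary of an ordered simplex, in recursive form. -/
noncomputable def listBoundary : List E → ListChain R E
  | [] => 0
  | x :: l => single l 1 - cone x (listBoundary l)

/-- The augmented simplicial boundary operator. -/
noncomputable def boundary : ListChain R E →ₗ[R] ListChain R E :=
  linearCombination R listBoundary

/-- The chain map induced by a map of vertices. -/
noncomputable def map (f : E → F) : ListChain R E →ₗ[R] ListChain R F :=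
  lmapDomain R R (List.map f)

/-- The prism over an ordered simplex, between its images under `f` and `g`. -/
noncomputable def listPrism (f g : E → F) : List E → ListChain R F
  | [] => 0
  | x :: l => cone (f x) (single (g x :: l.map g) 1) - cone (f x) (listPrism f g l)

/-- The prism operator, a chain homotopy between `map f` and `map g`. -/
noncomputable def prism (f g : E → F) : ListChain R E →ₗ[R] ListChain R F :=
  linearCombination R (listPrism f g)

@[simp] lemma cone_single (x : E) (l : List E) (r : R) :
    cone x (single l r) = single (x :: l) r := by
  simp [cone]

@[simp] lemma boundary_single (l : List E) : boundary (single l (1 : R)) = listBoundary l := by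
  simp [boundary]

@[simp] lemma map_single (f : E → F) (l : List E) (r : R) :
    map f (single l r) = single (l.map f) r := by
  simp [map]

@[simp] lemma prism_single (f g : E → F) (l : List E) :
    prism f g (single l (1 : R)) = listPrism f g l := by
  simp [prism]

section Extensionality

variable {M : Type*} [AddCommGroup M] [Module R M] {φ ψ : ListChain R E →ₗ[R] M}

lemma map_mem_of_mem_supported {A : Set (List E)} {S : Submodule R M}
    (h : ∀ l ∈ A, φ (single l 1) ∈ S) {c : ListChain R E} (hc : c ∈ supported R R A) :
    φ c ∈ S := by
  rw [supported_eq_span_single] at hc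
  have hspan : Submodule.span R ((single · (1 : R)) '' A) ≤ S.comap φ :=
    Submodule.span_le.2 (Set.forall_mem_image.2 h)
  exact hspan hc

lemma eq_of_mem_supported {A : Set (List E)} (h : ∀ l ∈ A, φ (single l 1) = ψ (single l 1))
    {c : ListChain R E} (hc : c ∈ supported R R A) : φ c = ψ c := by
  rw [supported_eq_span_single] at hc
  exact LinearMap.eqOn_span (Set.forall_mem_image.2 h) hc

lemma hom_congr (h : ∀ l, φ (single l 1) = ψ (single l 1)) (c : ListChain R E) : φ c = ψ c :=
  LinearMap.congr_fun (lhom_ext' fun l => LinearMap.ext_ring (h l)) c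

end Extensionality

lemma boundary_cone (x : E) (c : ListChain R E) :
    boundary (cone x c) = c - cone x (boundary c) :=
  hom_congr (φ := boundary ∘ₗ cone x) (ψ := LinearMap.id - cone x ∘ₗ boundary)
    (fun l => by simp [listBoundary]) c

lemma map_cone (f : E → F) (x : E) (c : ListChain R E) :
    map f (cone x c) = cone (f x) (map f c) :=
  hom_congr (φ := map f ∘ₗ cone x) (ψ := cone (f x) ∘ₗ map f) (fun l => by simp) c

lemma prism_cone (f g : E → F) (x : E) (c : ListChain R E) :
    prism f g (cone x c) =
      cone (f x) (cone (g x) (map g c)) - cone (f x) (prism f g c) :=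
  hom_congr (φ := prism f g ∘ₗ cone x)
    (ψ := cone (f x) ∘ₗ cone (g x) ∘ₗ map g - cone (f x) ∘ₗ prism f g)
    (fun l => by simp [listPrism]) c

lemma boundary_boundary (c : ListChain R E) : boundary (boundary c) = 0 := by
  refine hom_congr (φ := boundary ∘ₗ boundary) (ψ := 0) (fun l => ?_) c
  induction l with
  | nil => simp [listBoundary]
  | cons x l ih => simpa [listBoundary, boundary_cone] using congrArg (cone x) ih

lemma boundary_map (f : E → F) (c : ListChain R E) :
    boundary (map f c) = map f (boundary c) := by
  refine hom_congr (φ := boundary ∘ₗ map f) (ψ := map f ∘ₗ boundary) (fun l => ?_) c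
  induction l with
  | nil => simp [listBoundary]
  | cons x l ih =>
    simp only [LinearMap.comp_apply, map_single, boundary_single] at ih
    simp [listBoundary, map_cone, ih]

lemma boundary_prism (f g : E → F) (c : ListChain R E) :
    boundary (prism f g c) = map g c - map f c - prism f g (boundary c) := by
  refine hom_congr (φ := boundary ∘ₗ prism f g)
    (ψ := map g - map f - prism f g ∘ₗ boundary) (fun l => ?_) c
  induction l with
  | nil => simp [listBoundary, listPrism]
  | cons x l ih =>
    have hg := boundary_map (R := R) g (single l 1)
    simp only [LinearMap.comp_apply, LinearMap.sub_apply, map_single, prism_single,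
      boundary_single] at ih hg
    simp only [LinearMap.comp_apply, LinearMap.sub_apply, map_single, prism_single,
      boundary_single, listPrism, listBoundary, map_sub, boundary_cone, prism_cone, hg, ih,
      List.map_cons, cone_single]
    abel

lemma map_id : map (R := R) (id : E → E) = 1 := by
  simp [map, lmapDomain_id, Module.End.one_eq_id]

lemma map_pow_eq_map_iterate (s : E → E) (i : ℕ) : map (R := R) s ^ i = map s^[i] := by
  induction i with
  | zero => exact map_id.symm
  | succ i ih =>
    refine LinearMap.ext (hom_congr fun l => ?_)
    simp [pow_succ, ih]

section Clique

variable {r : E → E → Prop} {r' : F → F → Prop} {n : ℕ} {c : ListChain R E}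

/-- Chains of the clique complex of the relation `r`, spanned by the lists of `n` vertices any
two of which are related. Repetitions are allowed, so every vertex is related to itself. -/
noncomputable def cliqueChains (R : Type*) [Ring R] (r : E → E → Prop) (n : ℕ) :
    Submodule R (ListChain R E) :=
  supported R R {l | l.length = n ∧ ∀ x ∈ l, ∀ y ∈ l, r x y}

lemma single_mem_cliqueChains {l : List E} (h : ∀ x ∈ l, ∀ y ∈ l, r x y) (a : R) :
    single l a ∈ cliqueChains R r l.length :=
  single_mem_supported R a ⟨rfl, h⟩

lemma cliqueChains_mono {r₁ r₂ : E → E → Prop} (h : ∀ x y, r₁ x y → r₂ x y) (n : ℕ) :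
    cliqueChains R r₁ n ≤ cliqueChains R r₂ n :=
  supported_mono fun _ hl => ⟨hl.1, fun x hx y hy => h x y (hl.2 x hx y hy)⟩

lemma map_mem_cliqueChains {f : E → F} (h : ∀ x y, r x y → r' (f x) (f y))
    (hc : c ∈ cliqueChains R r n) : map f c ∈ cliqueChains R r' n := by
  refine map_mem_of_mem_supported (fun l hl => ?_) hc
  rw [map_single]
  refine single_mem_supported R _ ⟨by simp [hl.1], ?_⟩
  simpa using fun x hx y hy => h x y (hl.2 x hx y hy)

lemma listBoundary_mem_supported (l : List E) :
    listBoundary l ∈ supported R R {l' : List E | l'.length + 1 = l.length ∧ l' ⊆ l} := by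
  induction l with
  | nil => exact Submodule.zero_mem _
  | cons a l ih =>
    refine Submodule.sub_mem _ (single_mem_supported R _ ⟨by simp, by simp⟩) ?_
    refine map_mem_of_mem_supported (fun l' hl' => ?_) ih
    rw [cone_single]
    exact single_mem_supported R _ ⟨by simp [hl'.1], List.cons_subset_cons a hl'.2⟩

lemma boundary_mem_cliqueChains (hc : c ∈ cliqueChains R r (n + 1)) :
    boundary c ∈ cliqueChains R r n := by
  refine map_mem_of_mem_supported (fun l hl => ?_) hc
  rw [boundary_single]
  refine supported_mono ?_ (listBoundary_mem_supported l)
  rintro l' ⟨hlen, hsub⟩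
  exact ⟨by have := hl.1; omega, fun x hx y hy => hl.2 x (hsub hx) y (hsub hy)⟩

lemma listPrism_mem_supported (f g : E → F) (l : List E) :
    listPrism f g l ∈ supported R R
      {l' : List F | l'.length = l.length + 1 ∧ l' ⊆ l.map f ++ l.map g} := by
  induction l with
  | nil => exact Submodule.zero_mem _
  | cons a l ih =>
    refine Submodule.sub_mem _ ?_ (map_mem_of_mem_supported (fun l' hl' => ?_) ih)
    · rw [cone_single]
      exact single_mem_supported R _ ⟨by simp, by simp⟩
    · rw [cone_single]
      refine single_mem_supported R _ ⟨by simp [hl'.1], ?_⟩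
      have := hl'.2
      grind

lemma prism_mem_cliqueChains {f g : E → F}
    (h : ∀ x y, r x y → ∀ φ ∈ [f, g], ∀ ψ ∈ [f, g], r' (φ x) (ψ y))
    (hc : c ∈ cliqueChains R r n) : prism f g c ∈ cliqueChains R r' (n + 1) := by
  refine map_mem_of_mem_supported (fun l hl => ?_) hc
  rw [prism_single]
  refine supported_mono ?_ (listPrism_mem_supported f g l)
  rintro l' ⟨hlen, hsub⟩
  have hmem {x'} (hx' : x' ∈ l') : ∃ φ ∈ [f, g], ∃ x ∈ l, φ x = x' := by
    simpa using hsub hx'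
  refine ⟨by rw [hlen, hl.1], fun x' hx' y' hy' => ?_⟩
  obtain ⟨φ, hφ, x, hx, rfl⟩ := hmem hx'
  obtain ⟨ψ, hψ, y, hy, rfl⟩ := hmem hy'
  exact h x y (hl.2 x hx y hy) φ hφ ψ hψ

lemma cone_map_const_mem_cliqueChains {e : F} {f : E → F} (he : r' e e)
    (hf : ∀ x, r x x → f x = e) (hc : c ∈ cliqueChains R r n) :
    cone e (map f c) ∈ cliqueChains R r' (n + 1) := by
  refine map_mem_of_mem_supported (φ := cone e ∘ₗ map f) (fun l hl => ?_) hc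
  rw [LinearMap.comp_apply, map_single, cone_single]
  refine single_mem_supported R _ ⟨by simp [hl.1], ?_⟩
  have heq : ∀ x ∈ e :: l.map f, x = e := by simpa using fun x hx => hf x (hl.2 x hx x hx)
  exact fun x hx y hy => heq x hx ▸ heq y hy ▸ he

/-- A discrete nullhomotopy `f 0, …, f m` of mesh controlled by `r'` fills cycles. -/
lemma exists_boundary_eq_map {m : ℕ} {f : ℕ → E → F} {e : F} (he : r' e e)
    (hf : ∀ x, r x x → f m x = e)
    (hr : ∀ i j, i ≤ m → j ≤ m → i ≤ j + 1 → j ≤ i + 1 → ∀ x y, r x y → r' (f i x) (f j y))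
    {z : ListChain R E} (hz : z ∈ cliqueChains R r n) (hbd : boundary z = 0) :
    ∃ w ∈ cliqueChains R r' (n + 1), boundary w = map (f 0) z := by
  refine ⟨cone e (map (f m) z) - ∑ j ∈ Finset.range m, prism (f j) (f (j + 1)) z,
    Submodule.sub_mem _ (cone_map_const_mem_cliqueChains he hf hz)
      (Submodule.sum_mem _ fun j hj => prism_mem_cliqueChains (fun x y hxy => ?_) hz), ?_⟩
  · have hjm : j + 1 ≤ m := Finset.mem_range.1 hj
    simp only [List.forall_mem_cons, List.not_mem_nil, false_imp_iff, implies_true, and_true]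
    refine ⟨⟨?_, ?_⟩, ?_, ?_⟩ <;> exact hr _ _ (by omega) (by omega) (by omega) (by omega) x y hxy
  · simp only [map_sub, map_sum, boundary_cone, boundary_map, boundary_prism, hbd, map_zero,
      sub_zero, Finset.sum_range_sub (fun j => map (f j) z)]
    abel

end Clique

end ListChain

section PeriodicOp

variable {R M M' : Type*} [Ring R] [AddCommGroup M] [Module R M] [AddCommGroup M'] [Module R M']

/-- The differentials `1 - σ` and `1 + σ + ⋯ + σ ^ (p - 1)` of the periodic resolution of the
cyclic group of order `p`, alternating with the parity of `n`. -/
noncomputable def periodicOp (p : ℕ) (σ : Module.End R M) (n : ℕ) : Module.End R M :=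
  if Even n then 1 - σ else ∑ i ∈ Finset.range p, σ ^ i

lemma periodicOp_of_even {p : ℕ} {σ : Module.End R M} {n : ℕ} (hn : Even n) :
    periodicOp p σ n = 1 - σ :=
  if_pos hn

lemma periodicOp_of_odd {p : ℕ} {σ : Module.End R M} {n : ℕ} (hn : Odd n) :
    periodicOp p σ n = ∑ i ∈ Finset.range p, σ ^ i :=
  if_neg (Nat.not_even_iff_odd.2 hn)

lemma periodicOp_add_two (p : ℕ) (σ : Module.End R M) (n : ℕ) :
    periodicOp p σ (n + 2) = periodicOp p σ n := by
  simp [periodicOp, Nat.even_add]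

lemma periodicOp_succ_periodicOp {p : ℕ} {σ : Module.End R M} (hσ : σ ^ p = 1) (n : ℕ) (x : M) :
    periodicOp p σ (n + 1) (periodicOp p σ n x) = 0 := by
  rw [← Module.End.mul_apply]
  rcases n.even_or_odd with hn | hn
  · simp [periodicOp_of_even hn, periodicOp_of_odd hn.add_one, geom_sum_mul_neg, hσ]
  · simp [periodicOp_of_odd hn, periodicOp_of_even hn.add_one, mul_neg_geom_sum, hσ]

lemma periodicOp_mem {p : ℕ} {σ : Module.End R M} {S : Submodule R M} (hS : ∀ x ∈ S, σ x ∈ S)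
    (n : ℕ) {x : M} (hx : x ∈ S) : periodicOp p σ n x ∈ S := by
  rcases n.even_or_odd with hn | hn
  · simpa [periodicOp_of_even hn] using S.sub_mem hx (hS x hx)
  · simpa [periodicOp_of_odd hn] using
      S.sum_mem fun i _ => Module.End.pow_apply_mem_of_forall_mem i hS x hx

lemma map_periodicOp {p : ℕ} {σ : Module.End R M} {σ' : Module.End R M'} {φ : M →ₗ[R] M'}
    {S : Submodule R M} (hS : ∀ x ∈ S, σ x ∈ S) (h : ∀ x ∈ S, φ (σ x) = σ' (φ x)) (n : ℕ) {x : M}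
    (hx : x ∈ S) : φ (periodicOp p σ n x) = periodicOp p σ' n (φ x) := by
  have hpow (i : ℕ) : φ ((σ ^ i) x) = (σ' ^ i) (φ x) := by
    induction i with
    | zero => simp
    | succ i ih =>
      rw [pow_succ', pow_succ', Module.End.mul_apply, Module.End.mul_apply, ← ih]
      exact h _ (Module.End.pow_apply_mem_of_forall_mem i hS x hx)
  rcases n.even_or_odd with hn | hn
  · simp [periodicOp_of_even hn, h x hx]
  · simp [periodicOp_of_odd hn, hpow]

end PeriodicOp

section Alternating

open ListChain Finsupp

variable {R : Type*} [Ring R] {L : Type*}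

/-- Alternating cochains: functionals on chains that change sign when two adjacent vertices of an
ordered simplex are exchanged. -/
def IsAlternating (φ : ListChain R L →ₗ[R] R) : Prop :=
  ∀ u a b v, φ (single (u ++ a :: b :: v) 1) = -φ (single (u ++ b :: a :: v) 1)

namespace IsAlternating

variable {φ : ListChain R L →ₗ[R] R}

lemma comp_cone (hφ : IsAlternating φ) (x : L) : IsAlternating (φ ∘ₗ cone x) :=
  fun u a b v => by simpa using hφ (x :: u) a b v

lemma comp_map (hφ : IsAlternating φ) (f : L → L) : IsAlternating (φ ∘ₗ map f) :=
  fun u a b v => by simpa using hφ (u.map f) (f a) (f b) (v.map f)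

lemma comp_boundary (hφ : IsAlternating φ) : IsAlternating (φ ∘ₗ boundary) := by
  intro u a b v
  simp only [LinearMap.comp_apply, boundary_single]
  induction u generalizing φ with
  | nil =>
    have hswap : φ (cone a (cone b (listBoundary v))) = -φ (cone b (cone a (listBoundary v))) :=
      hom_congr (φ := φ ∘ₗ cone a ∘ₗ cone b) (ψ := -(φ ∘ₗ cone b ∘ₗ cone a))
        (fun l => by simpa using hφ [] a b l) _
    simp only [List.nil_append, listBoundary, map_sub, cone_single, hswap]
    abel
  | cons x u ih =>
    have hcone := ih (hφ.comp_cone x)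
    simp only [LinearMap.comp_apply] at hcone
    simp only [List.cons_append, listBoundary, map_sub, hφ u a b v, hcone]
    abel

lemma eq_or_eq_neg_of_perm (hφ : IsAlternating φ) {l l' : List L} (h : l.Perm l') :
    φ (single l 1) = φ (single l' 1) ∨ φ (single l 1) = -φ (single l' 1) := by
  induction h generalizing φ with
  | nil => exact Or.inl rfl
  | cons x _ ih => simpa using ih (hφ.comp_cone x)
  | swap x y l => exact Or.inr (hφ [] y x l)
  | trans _ _ ih₁ ih₂ =>
    rcases ih₁ hφ with h₁ | h₁ <;> rcases ih₂ hφ with h₂ | h₂ <;> simp [h₁, h₂]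

lemma apply_single_of_not_nodup (hφ : IsAlternating φ) (h2 : IsUnit (2 : R)) {l : List L}
    (hl : ¬ l.Nodup) : φ (single l 1) = 0 := by
  obtain ⟨a, ha⟩ : ∃ a, [a, a].Sublist l := by simpa [List.nodup_iff_sublist] using hl
  obtain ⟨v, hv⟩ := ha.exists_perm_append
  have hzero : φ (single (a :: a :: v) 1) = 0 := by
    rw [← h2.mul_right_eq_zero, two_mul]
    exact eq_neg_iff_add_eq_zero.1 (hφ [] a a v)
  rcases hφ.eq_or_eq_neg_of_perm hv with h | h <;> simp_all

end IsAlternating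

end Alternating

section Tucker

open ListChain Finsupp

variable {R : Type*} [Ring R] {J : Type*} {p : ℕ}

/-- The action of the generator of `ℤ/p` on labels, which consist of a colour in `J` and a phase
in `ZMod p`. -/
def labelShift : J × ZMod p → J × ZMod p :=
  Prod.map id (· + 1)

/-- Two labels are consistent unless they are different labels of the same colour. -/
def Consistent (a b : J × ZMod p) : Prop :=
  a.1 = b.1 → a = b

lemma consistent_labelShift {a b : J × ZMod p} (h : Consistent a b) :
    Consistent (labelShift a) (labelShift b) :=
  fun hab => congrArg labelShift (h hab)

/-- The phase of the labels in `S` whose colour is a distinguished one, chosen by means of the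
set of colours in `S` alone; this is what makes the choice equivariant. -/
noncomputable def basePhase (S : Set (J × ZMod p)) : ZMod p :=
  Classical.epsilon fun g => ∃ h : (Prod.fst '' S).Nonempty, (h.some, g) ∈ S

lemma basePhase_spec {S : Set (J × ZMod p)} (hS : S.Nonempty) :
    ∃ h : (Prod.fst '' S).Nonempty, (h.some, basePhase S) ∈ S := by
  refine Classical.epsilon_spec (p := fun g => ∃ h : (Prod.fst '' S).Nonempty, (h.some, g) ∈ S) ?_
  have h := hS.image Prod.fst
  obtain ⟨⟨j, g⟩, hjg, hj⟩ := h.some_mem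
  exact ⟨g, h, hj ▸ hjg⟩

lemma basePhase_image_labelShift {S : Set (J × ZMod p)} (hS : S.Nonempty)
    (hcons : ∀ a ∈ S, ∀ b ∈ S, Consistent a b) :
    basePhase (labelShift '' S) = basePhase S + 1 := by
  obtain ⟨h, hmem⟩ := basePhase_spec hS
  obtain ⟨h', a, ha, heq⟩ := basePhase_spec (hS.image labelShift)
  have hsome : h'.some = h.some := by
    have hfst : Prod.fst '' (labelShift '' S) = Prod.fst '' S := by
      simp [Set.image_image, labelShift]
    congr!
  have hbase : a = (h.some, basePhase S) :=
    hcons a ha _ hmem ((congrArg Prod.fst heq).trans hsome)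
  rw [hbase] at heq
  exact (congrArg Prod.snd heq).symm

lemma basePhase_map_iterate_labelShift {l : List (J × ZMod p)} (hl : l ≠ [])
    (hcons : ∀ a ∈ l, ∀ b ∈ l, Consistent a b) (i : ℕ) :
    basePhase {a | a ∈ l.map labelShift^[i]} = basePhase {a | a ∈ l} + i := by
  induction i generalizing l with
  | zero => simp
  | succ i ih =>
    have himage : {a | a ∈ l.map labelShift} = labelShift '' {a | a ∈ l} := by ext; simp
    have hcons' : ∀ a ∈ l.map labelShift, ∀ b ∈ l.map labelShift, Consistent a b := by
      simp only [List.forall_mem_map]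
      exact fun a ha b hb => consistent_labelShift (hcons a ha b hb)
    have hshift : basePhase (labelShift '' {a | a ∈ l}) = basePhase {a | a ∈ l} + 1 :=
      basePhase_image_labelShift (List.exists_mem_of_ne_nil l hl) hcons
    rw [Function.iterate_succ, ← List.map_map, ih (by simpa using hl) hcons', himage, hshift,
      Nat.cast_succ]
    ring

/-- A primitive of the cochain `φ` with respect to `periodicOp p (map labelShift) n`. It is built
from the values of `φ` on the translates of a simplex that precede base phase `0`, respectively
on the translate of base phase `0`. -/
noncomputable def primitive (n : ℕ) (φ : ListChain R (J × ZMod p) →ₗ[R] R) :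
    ListChain R (J × ZMod p) →ₗ[R] R :=
  linearCombination R fun l =>
    if Even n then
      ∑ i ∈ Finset.range (-basePhase {a | a ∈ l}).val, φ (single (l.map labelShift^[i]) 1)
    else if basePhase {a | a ∈ l} = 0 then φ (single l 1) else 0

lemma primitive_single_of_even {n : ℕ} (hn : Even n) (φ : ListChain R (J × ZMod p) →ₗ[R] R)
    (l : List (J × ZMod p)) : primitive n φ (single l 1) =
      ∑ i ∈ Finset.range (-basePhase {a | a ∈ l}).val, φ (single (l.map labelShift^[i]) 1) := by
  simp [primitive, hn]

lemma primitive_single_of_odd {n : ℕ} (hn : Odd n) (φ : ListChain R (J × ZMod p) →ₗ[R] R)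
    (l : List (J × ZMod p)) : primitive n φ (single l 1) =
      if basePhase {a | a ∈ l} = 0 then φ (single l 1) else 0 := by
  simp [primitive, Nat.not_even_iff_odd.2 hn]

lemma isAlternating_primitive (n : ℕ) {φ : ListChain R (J × ZMod p) →ₗ[R] R}
    (hφ : IsAlternating φ) : IsAlternating (primitive n φ) := by
  intro u a b v
  have hset : {x | x ∈ u ++ a :: b :: v} = {x | x ∈ u ++ b :: a :: v} := by
    ext; simp [or_left_comm]
  rcases n.even_or_odd with hn | hn
  · rw [primitive_single_of_even hn, primitive_single_of_even hn, hset, ← Finset.sum_neg_distrib]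
    exact Finset.sum_congr rfl fun i _ => by simpa using hφ.comp_map labelShift^[i] u a b v
  · rw [primitive_single_of_odd hn, primitive_single_of_odd hn, hset, hφ u a b v]
    split_ifs <;> simp

lemma apply_val_add_one [NeZero p] {α : Type*} {G : ℕ → α} (hG : G p = G 0) (c : ZMod p) :
    G (c + 1).val = G (c.val + 1) := by
  have hval : (c + 1).val = (c.val + 1) % p := by
    rw [← ZMod.val_natCast, Nat.cast_succ, ZMod.natCast_zmod_val]
  rcases (Nat.succ_le_of_lt c.val_lt).lt_or_eq with h | h
  · rw [hval, Nat.mod_eq_of_lt h]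
  · rw [hval, ← Nat.succ_eq_add_one, h, Nat.mod_self, hG]

lemma primitive_periodicOp_single_of_even [NeZero p] {n : ℕ} (hn : Even n)
    {φ : ListChain R (J × ZMod p) →ₗ[R] R} {l : List (J × ZMod p)} (hl : l ≠ [])
    (hcons : ∀ a ∈ l, ∀ b ∈ l, Consistent a b)
    (hφ : ∑ i ∈ Finset.range p, φ (single (l.map labelShift^[i]) 1) = 0) :
    primitive n φ (periodicOp p (map labelShift) n (single l 1)) = φ (single l 1) := by
  let G (m : ℕ) : R := ∑ i ∈ Finset.range m, φ (single (l.map labelShift^[i]) 1)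
  set b := basePhase {a | a ∈ l}
  have hshift : ∑ i ∈ Finset.range (-(b + 1)).val,
      φ (single ((l.map labelShift).map labelShift^[i]) 1) + φ (single l 1) = G (-b).val := by
    rw [← neg_add_cancel_right (-b) 1, ← neg_add_rev, add_comm 1, apply_val_add_one (G := G) hφ]
    simp [G, Finset.sum_range_succ']
  have hb : basePhase {a | a ∈ l.map labelShift} = b + 1 := by
    simpa using basePhase_map_iterate_labelShift hl hcons 1
  rw [periodicOp_of_even hn, LinearMap.sub_apply, Module.End.one_apply, map_single, map_sub,
    primitive_single_of_even hn, primitive_single_of_even hn, hb]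
  exact sub_eq_of_eq_add' hshift.symm

lemma primitive_periodicOp_single_of_odd [NeZero p] {n : ℕ} (hn : Odd n)
    {φ : ListChain R (J × ZMod p) →ₗ[R] R} {l : List (J × ZMod p)} (hl : l ≠ [])
    (hcons : ∀ a ∈ l, ∀ b ∈ l, Consistent a b)
    (hφ : ∀ i, φ (single (l.map labelShift^[i]) 1) = φ (single l 1)) :
    primitive n φ (periodicOp p (map labelShift) n (single l 1)) = φ (single l 1) := by
  simp only [periodicOp_of_odd hn, LinearMap.sum_apply, map_pow_eq_map_iterate, map_single,
    map_sum, primitive_single_of_odd hn, basePhase_map_iterate_labelShift hl hcons, hφ]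
  rw [Finset.sum_eq_single (-basePhase {a | a ∈ l}).val]
  · simp
  · intro i hi hne
    refine if_neg fun hzero => hne ?_
    rw [neg_eq_of_add_eq_zero_right hzero, ZMod.val_cast_of_lt (Finset.mem_range.1 hi)]
  · simp [ZMod.val_lt]

lemma map_labelShift_mem_cliqueChains {m : ℕ} {c : ListChain R (J × ZMod p)}
    (hc : c ∈ cliqueChains R Consistent m) : map labelShift c ∈ cliqueChains R Consistent m :=
  map_mem_cliqueChains (fun _ _ => consistent_labelShift) hc

lemma primitive_periodicOp [NeZero p] {m n : ℕ} {φ : ListChain R (J × ZMod p) →ₗ[R] R}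
    (hφ : ∀ c ∈ cliqueChains R Consistent (m + 1), φ (periodicOp p (map labelShift) (n + 1) c) = 0)
    {c : ListChain R (J × ZMod p)} (hc : c ∈ cliqueChains R Consistent (m + 1)) :
    primitive n φ (periodicOp p (map labelShift) n c) = φ c := by
  refine eq_of_mem_supported (φ := primitive n φ ∘ₗ periodicOp p (map labelShift) n)
    (fun l hl => ?_) hc
  have hne : l ≠ [] := List.ne_nil_of_length_eq_add_one hl.1
  have hmem := hl.1 ▸ single_mem_cliqueChains hl.2 (1 : R)
  rcases n.even_or_odd with hn | hn
  · refine primitive_periodicOp_single_of_even hn hne hl.2 ?_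
    simpa [periodicOp_of_odd hn.add_one, map_pow_eq_map_iterate] using hφ _ hmem
  · have hinv : ∀ c ∈ cliqueChains R Consistent (m + 1), φ (map labelShift c) = φ c := by
      intro c hc
      have hsub := hφ c hc
      rw [periodicOp_of_even hn.add_one, LinearMap.sub_apply, map_sub, sub_eq_zero] at hsub
      exact hsub.symm
    refine primitive_periodicOp_single_of_odd hn hne hl.2 fun i => ?_
    induction i with
    | zero => simp
    | succ i ih =>
      rw [Function.iterate_succ', ← List.map_map, ← map_single, hinv _ ?_, ih]
      rw [← map_single, ← map_pow_eq_map_iterate]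
      exact Module.End.pow_apply_mem_of_forall_mem i
        (fun _ => map_labelShift_mem_cliqueChains) _ hmem

/-- The cochain detecting the obstruction class of dimension `n` on labelled simplices: starting
from the augmentation, it is obtained by repeatedly taking primitives and coboundaries. -/
noncomputable def tuckerCochain (R J : Type*) [Ring R] (p : ℕ) :
    ℕ → ListChain R (J × ZMod p) →ₗ[R] R
  | 0 => lapply [] ∘ₗ boundary
  | n + 1 => primitive n (tuckerCochain R J p n) ∘ₗ boundary

lemma isAlternating_tuckerCochain (n : ℕ) : IsAlternating (tuckerCochain R J p n) := by
  induction n with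
  | zero =>
    refine IsAlternating.comp_boundary fun u a b v => ?_
    simp [lapply]
  | succ n ih => exact (isAlternating_primitive n ih).comp_boundary

lemma tuckerCochain_boundary (n : ℕ) (c : ListChain R (J × ZMod p)) :
    tuckerCochain R J p n (boundary c) = 0 := by
  cases n <;> simp [tuckerCochain, boundary_boundary]

lemma boundary_periodicOp_map {E : Type*} (s : E → E) (n : ℕ) (c : ListChain R E) :
    boundary (periodicOp p (map s) n c) = periodicOp p (map s) n (boundary c) :=
  map_periodicOp (S := ⊤) (fun _ _ => trivial) (fun c _ => boundary_map s c) n trivial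

lemma tuckerCochain_periodicOp [CharP R p] [NeZero p] (n : ℕ) {c : ListChain R (J × ZMod p)}
    (hc : c ∈ cliqueChains R Consistent (n + 1)) :
    tuckerCochain R J p n (periodicOp p (map labelShift) (n + 1) c) = 0 := by
  induction n generalizing c with
  | zero =>
    refine eq_of_mem_supported
      (φ := tuckerCochain R J p 0 ∘ₗ periodicOp p (map labelShift) 1) (ψ := 0) (fun l hl => ?_) hc
    obtain ⟨a, rfl⟩ := List.length_eq_one_iff.1 hl.1
    simp [tuckerCochain, periodicOp_of_odd odd_one, map_pow_eq_map_iterate, listBoundary]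
  | succ n ih =>
    rw [periodicOp_add_two, tuckerCochain, LinearMap.comp_apply, boundary_periodicOp_map,
      primitive_periodicOp (fun _ => ih) (boundary_mem_cliqueChains hc), tuckerCochain_boundary]

lemma tuckerCochain_succ_of_boundary_eq [CharP R p] [NeZero p] {n : ℕ}
    {h w : ListChain R (J × ZMod p)} (hh : h ∈ cliqueChains R Consistent (n + 1))
    (hw : boundary w = periodicOp p (map labelShift) n h) :
    tuckerCochain R J p (n + 1) w = tuckerCochain R J p n h := by
  rw [tuckerCochain, LinearMap.comp_apply, hw,
    primitive_periodicOp (fun _ => tuckerCochain_periodicOp n) hh]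

lemma tuckerCochain_card [Fintype J] (h2 : IsUnit (2 : R)) {c : ListChain R (J × ZMod p)}
    (hc : c ∈ cliqueChains R Consistent (Fintype.card J + 1)) (n : ℕ) :
    tuckerCochain R J p n c = 0 := by
  refine eq_of_mem_supported (ψ := 0) (fun l hl => ?_) hc
  refine (isAlternating_tuckerCochain n).apply_single_of_not_nodup h2 fun hnodup => ?_
  have hcolours : (l.map Prod.fst).Nodup :=
    hnodup.map_on fun a ha b hb hab => hl.2 a ha b hb hab
  have hle := hcolours.length_le_card
  rw [List.length_map, hl.1] at hle
  omega

end Tucker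

section Filtration

open ListChain Finsupp

/-- `X` is contained in `Y` and can be contracted within `Y` to a point. -/
def ContractsInto {E : Type*} [TopologicalSpace E] (X Y : Set E) : Prop :=
  ∃ H : ℝ × E → E, ∃ e ∈ Y, ContinuousOn H (Set.Icc 0 1 ×ˢ X) ∧
    Set.MapsTo H (Set.Icc 0 1 ×ˢ X) Y ∧ ∀ x ∈ X, H (0, x) = x ∧ H (1, x) = e

lemma ContractsInto.subset {E : Type*} [TopologicalSpace E] {X Y : Set E}
    (h : ContractsInto X Y) : X ⊆ Y := by
  obtain ⟨H, e, -, -, hmaps, hH⟩ := h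
  exact fun x hx => (hH x hx).1 ▸ hmaps ⟨Set.left_mem_Icc.2 zero_le_one, hx⟩

variable {R E : Type*} [Ring R] [PseudoMetricSpace E]

/-- Two points are near if they lie in `X` at distance less than `ε`; the clique complex of this
relation is the Vietoris–Rips complex of `X`. -/
def IsNear (X : Set E) (ε : ℝ) (x y : E) : Prop :=
  x ∈ X ∧ y ∈ X ∧ dist x y < ε

lemma ContractsInto.exists_boundary_eq {X Y : Set E} (hXY : ContractsInto X Y)
    (hX : IsCompact X) {ε : ℝ} (hε : 0 < ε) :
    ∃ δ > 0, ∀ n, ∀ z ∈ cliqueChains R (IsNear X δ) n, boundary z = 0 →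
      ∃ w ∈ cliqueChains R (IsNear Y ε) (n + 1), boundary w = z := by
  obtain ⟨H, e, heY, hcont, hmaps, hH⟩ := hXY
  obtain ⟨δ, hδ, hunif⟩ := Metric.uniformContinuousOn_iff.1
    ((isCompact_Icc.prod hX).uniformContinuousOn_of_continuous hcont) ε hε
  obtain ⟨m, hm⟩ := exists_nat_one_div_lt hδ
  let time (i : ℕ) : ℝ := i / (m + 1)
  have htime {i : ℕ} (hi : i ≤ m + 1) : time i ∈ Set.Icc (0 : ℝ) 1 :=
    ⟨by positivity, div_le_one_of_le₀ (by exact_mod_cast hi) (by positivity)⟩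
  have hmesh {i j : ℕ} (hij : i ≤ j + 1) (hji : j ≤ i + 1) : dist (time i) (time j) < δ := by
    refine lt_of_le_of_lt ?_ hm
    rw [Real.dist_eq, ← sub_div, abs_div, abs_of_pos (by positivity : (0 : ℝ) < m + 1)]
    gcongr
    have hij' : (i : ℝ) ≤ j + 1 := by exact_mod_cast hij
    have hji' : (j : ℝ) ≤ i + 1 := by exact_mod_cast hji
    exact abs_sub_le_iff.2 ⟨by linarith, by linarith⟩
  refine ⟨δ, hδ, fun n z hz hbd => ?_⟩
  obtain ⟨w, hw, hbw⟩ := exists_boundary_eq_map (r' := IsNear Y ε) (m := m + 1)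
    (f := fun i x => H (time i, x)) (e := e) ⟨heY, heY, by rwa [dist_self]⟩
    (fun x hx => by simpa [time, div_self (m.cast_add_one_ne_zero (R := ℝ))] using (hH x hx.1).2)
    (fun i j hi hj hij hji x y hxy =>
      ⟨hmaps ⟨htime hi, hxy.1⟩, hmaps ⟨htime hj, hxy.2.1⟩, hunif _ ⟨htime hi, hxy.1⟩ _
        ⟨htime hj, hxy.2.1⟩ (max_lt (hmesh hij hji) hxy.2.2)⟩) hz hbd
  refine ⟨w, hw, hbw.trans (eq_of_mem_supported (ψ := LinearMap.id) (fun l hl => ?_) hz)⟩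
  have hfix : ∀ x ∈ l, H (time 0, x) = x := fun x hx => by
    simpa [time] using (hH x (hl.2 x hx x hx).1).1
  simp [List.map_id'' , List.map_congr_left hfix]

/-- A filtration `X 0 ⊆ ⋯ ⊆ X N` by compact sets invariant under `s`, each contractible in the
next; it plays the role of the skeleta of a free contractible `ℤ/p`-complex. -/
structure IsContractibleFiltration (s : E → E) (X : ℕ → Set E) (N : ℕ) : Prop where
  nonempty : (X 0).Nonempty
  isCompact : ∀ n ≤ N, IsCompact (X n)
  mapsTo : ∀ n ≤ N, Set.MapsTo s (X n) (X n)
  contractsInto : ∀ n < N, ContractsInto (X n) (X (n + 1))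

variable {s : E → E} {X : ℕ → Set E} {N : ℕ}

lemma IsContractibleFiltration.subset (hX : IsContractibleFiltration s X N) {n : ℕ}
    (hn : n ≤ N) : X n ⊆ X N := by
  induction hn using Nat.decreasingInduction with
  | self => exact subset_rfl
  | of_succ n hn ih => exact (hX.contractsInto n hn).subset.trans ih

section Tucker

variable {J : Type*} {p : ℕ} {lam : E → J × ZMod p} {Y : Set E} {ε : ℝ} {m : ℕ}

lemma map_mem_cliqueChains_isNear (hs : Isometry s) (hsY : Set.MapsTo s Y Y) {c : ListChain R E}
    (hc : c ∈ cliqueChains R (IsNear Y ε) m) : map s c ∈ cliqueChains R (IsNear Y ε) m :=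
  map_mem_cliqueChains (fun x y hxy => ⟨hsY hxy.1, hsY hxy.2.1, by rw [hs.dist_eq]; exact hxy.2.2⟩)
    hc

lemma map_periodicOp_of_equivariant (hs : Isometry s) (hsY : Set.MapsTo s Y Y)
    (hlam : ∀ x ∈ Y, lam (s x) = labelShift (lam x)) (n : ℕ) {c : ListChain R E}
    (hc : c ∈ cliqueChains R (IsNear Y ε) m) :
    map lam (periodicOp p (map s) n c) = periodicOp p (map labelShift) n (map lam c) := by
  refine map_periodicOp (S := cliqueChains R (IsNear Y ε) m)
    (fun c hc => map_mem_cliqueChains_isNear hs hsY hc) (fun c hc => ?_) n hc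
  refine eq_of_mem_supported (φ := map lam ∘ₗ map s) (ψ := map labelShift ∘ₗ map lam)
    (fun l hl => ?_) hc
  have heq : ∀ x ∈ l, (lam ∘ s) x = (labelShift ∘ lam) x :=
    fun x hx => hlam x (hl.2 x hx x hx).1
  simp [List.map_congr_left heq]

/-- The chains are obtained by repeatedly filling `periodicOp p (map s) n h`. -/
lemma exists_tuckerCochain_eq_one [CharP R p] [NeZero p] (hs : Isometry s) (hsp : s^[p] = id)
    (hX : IsContractibleFiltration s X N) (hlam : ∀ x ∈ X N, lam (s x) = labelShift (lam x))
    (hε : 0 < ε)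
    (hcons : ∀ x y, IsNear (X N) ε x y → Consistent (lam x) (lam y)) {n : ℕ} (hn : n ≤ N) :
    ∀ δ > 0, ∃ h ∈ cliqueChains R (IsNear (X n) δ) (n + 1),
      boundary (periodicOp p (map s) n h) = 0 ∧ tuckerCochain R J p n (map lam h) = 1 := by
  induction n with
  | zero =>
    intro δ hδ
    obtain ⟨x, hx⟩ := hX.nonempty
    refine ⟨single [x] 1, ?_, ?_, ?_⟩
    · exact single_mem_cliqueChains (l := [x]) (by simp [IsNear, hx, hδ]) 1
    · simp [periodicOp_of_even, listBoundary]
    · simp [tuckerCochain, listBoundary]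
  | succ n ih =>
    intro δ hδ
    have hnN : n ≤ N := (Nat.le_succ n).trans hn
    obtain ⟨η, hη, hfill⟩ := (hX.contractsInto n hn).exists_boundary_eq (R := R)
      (hX.isCompact n hnN) hδ
    obtain ⟨h, hh, hcycle, hone⟩ := ih hnN (min η ε) (lt_min hη hε)
    have hhη : h ∈ cliqueChains R (IsNear (X n) η) (n + 1) :=
      cliqueChains_mono (fun _ _ hxy => ⟨hxy.1, hxy.2.1, hxy.2.2.trans_le (min_le_left _ _)⟩) _ hh
    have hlabel : map lam h ∈ cliqueChains R Consistent (n + 1) :=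
      map_mem_cliqueChains (fun x y hxy => hcons x y ⟨hX.subset hnN hxy.1,
        hX.subset hnN hxy.2.1, hxy.2.2.trans_le (min_le_right _ _)⟩) hh
    obtain ⟨w, hw, hbw⟩ := hfill _ _
      (periodicOp_mem (fun _ => map_mem_cliqueChains_isNear hs (hX.mapsTo n hnN)) n hhη) hcycle
    have hpow : map (R := R) s ^ p = 1 := by rw [map_pow_eq_map_iterate, hsp, map_id]
    refine ⟨w, hw, ?_, ?_⟩
    · rw [boundary_periodicOp_map, hbw, periodicOp_succ_periodicOp hpow]
    · rw [tuckerCochain_succ_of_boundary_eq hlabel, hone]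
      rw [boundary_map, hbw, map_periodicOp_of_equivariant hs (hX.mapsTo n hnN)
        (fun x hx => hlam x (hX.subset hnN hx)) n hh]

/-- A `ℤ/p`-version of Tucker's lemma. -/
theorem exists_near_not_consistent [Fintype J] (hp : 1 < p) (hodd : Odd p) (hs : Isometry s)
    (hsp : s^[p] = id) (hX : IsContractibleFiltration s X (Fintype.card J))
    (hlam : ∀ x ∈ X (Fintype.card J), lam (s x) = labelShift (lam x)) (hε : 0 < ε) :
    ∃ x y, IsNear (X (Fintype.card J)) ε x y ∧ ¬ Consistent (lam x) (lam y) := by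
  have := Fact.mk hp
  have : NeZero p := ⟨by omega⟩
  have h2 : IsUnit (2 : ZMod p) := by
    simpa using (ZMod.isUnit_iff_coprime 2 p).2 (Nat.coprime_two_left.2 hodd)
  by_contra! hcons
  obtain ⟨h, hh, -, hone⟩ :=
    exists_tuckerCochain_eq_one (R := ZMod p) hs hsp hX hlam hε hcons le_rfl ε hε
  rw [tuckerCochain_card h2 (map_mem_cliqueChains hcons hh)] at hone
  exact zero_ne_one hone

end Tucker

end Filtration

section Labelling

/-- `A` is a strict superlevel set of `f`, cut out by a value that `f` does not take. -/
def IsUpperCut {ι : Type*} (f : ι → ℝ) (A : Finset ι) : Prop :=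
  ∀ a ∈ A, ∀ b ∉ A, f b < f a

section IsUpperCut

variable {ι : Type*} {f : ι → ℝ} {A B : Finset ι}

lemma IsUpperCut.eq_of_card_eq (hA : IsUpperCut f A) (hB : IsUpperCut f B)
    (hcard : A.card = B.card) : A = B := by
  by_contra hne
  obtain ⟨a, ha, ha'⟩ := Finset.not_subset.1 fun h =>
    hne (Finset.eq_of_subset_of_card_le h hcard.ge)
  obtain ⟨b, hb, hb'⟩ := Finset.not_subset.1 fun h =>
    hne (Finset.eq_of_subset_of_card_le h hcard.le).symm
  exact lt_asymm (hA a ha b hb') (hB b hb a ha')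

lemma isUpperCut_map_equiv (e : ι ≃ ι) :
    IsUpperCut (f ∘ e.symm) (A.map e.toEmbedding) ↔ IsUpperCut f A := by
  refine e.surjective.forall.trans (forall_congr' fun a => ?_)
  rw [Finset.mem_map_equiv, e.symm_apply_apply]
  refine forall_congr' fun _ => e.surjective.forall.trans (forall_congr' fun b => ?_)
  rw [Finset.mem_map_equiv, Function.comp_apply, Function.comp_apply, e.symm_apply_apply,
    e.symm_apply_apply]

lemma isOpen_setOf_isUpperCut [Finite ι] (A : Finset ι) : IsOpen {f : ι → ℝ | IsUpperCut f A} := by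
  simp only [IsUpperCut, Set.ofPred_forall]
  exact isOpen_iInter_of_finite fun a => isOpen_iInter_of_finite fun _ =>
    isOpen_iInter_of_finite fun b => isOpen_iInter_of_finite fun _ =>
      isOpen_lt (continuous_apply b) (continuous_apply a)

lemma exists_isUpperCut [Fintype ι] {a b : ι} (hab : f a ≠ f b) :
    ∃ A : Finset ι, A.Nonempty ∧ A ≠ Finset.univ ∧ IsUpperCut f A := by
  classical
  obtain ⟨m, -, hm⟩ := Finset.exists_max_image Finset.univ f ⟨a, Finset.mem_univ a⟩
  refine ⟨Finset.univ.filter (f · = f m), ⟨m, by simp⟩, fun huniv => hab ?_, fun c hc e he => ?_⟩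
  · have hconst (c : ι) : f c = f m := by simpa using huniv.ge (Finset.mem_univ c)
    rw [hconst a, hconst b]
  · rw [Finset.mem_filter_univ] at hc he
    exact hc ▸ lt_of_le_of_ne (hm e (Finset.mem_univ e)) he

end IsUpperCut

/-- The functions with a strict superlevel set of `i` elements whose centre of mass is `g`. -/
def cutRegion {p : ℕ} (i : ℕ) (g : ZMod p) : Set (ZMod p → ℝ) :=
  {f | ∃ A : Finset (ZMod p), A.card = i ∧ ∑ a ∈ A, a = i * g ∧ IsUpperCut f A}

section CutRegion

variable {p : ℕ} {i : ℕ} {f : ZMod p → ℝ}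

lemma isOpen_cutRegion [NeZero p] (i : ℕ) (g : ZMod p) : IsOpen (cutRegion i g) := by
  simp only [cutRegion, Set.ofPred_exists, Set.ofPred_and]
  exact isOpen_iUnion fun A =>
    isOpen_const.and (isOpen_const.and (isOpen_setOf_isUpperCut A))

lemma eq_of_mem_cutRegion [Fact p.Prime] (hi : (i : ZMod p) ≠ 0) {g g' : ZMod p}
    (hg : f ∈ cutRegion i g) (hg' : f ∈ cutRegion i g') : g = g' := by
  obtain ⟨A, hcard, hsum, hA⟩ := hg
  obtain ⟨A', hcard', hsum', hA'⟩ := hg'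
  obtain rfl := hA.eq_of_card_eq hA' (hcard.trans hcard'.symm)
  exact mul_left_cancel₀ hi (hsum.symm.trans hsum')

lemma comp_sub_one_mem_cutRegion {g : ZMod p} :
    f ∘ (· - 1) ∈ cutRegion i (g + 1) ↔ f ∈ cutRegion i g := by
  let e := Equiv.addRight (1 : ZMod p)
  refine e.finsetCongr.surjective.exists.trans (exists_congr fun A => ?_)
  have hsum : ∑ a ∈ A.map e.toEmbedding, a = ∑ a ∈ A, a + A.card := by
    simp [e, Finset.sum_add_distrib]
  have hcomp : f ∘ (· - 1) = f ∘ e.symm := funext fun a => congrArg f (sub_eq_add_neg a 1)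
  rw [Equiv.finsetCongr_apply, Finset.card_map, hsum, hcomp, isUpperCut_map_equiv]
  refine and_congr_right fun hcard => and_congr_left fun _ => ?_
  rw [hcard, mul_add_one, add_left_inj]

lemma exists_mem_cutRegion [Fact p.Prime] {a b : ZMod p} (hab : f a ≠ f b) :
    ∃ (i : Fin (p - 1)) (g : ZMod p), f ∈ cutRegion (i + 1) g := by
  obtain ⟨A, hne, hA, hcut⟩ := exists_isUpperCut hab
  have hlt : A.card < p := by simpa using Finset.card_lt_card (Finset.ssubset_univ_iff.2 hA)
  have hpos := hne.card_pos
  have hcard : ((A.card : ℕ) : ZMod p) ≠ 0 := by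
    rw [Ne, ZMod.natCast_eq_zero_iff]
    exact Nat.not_dvd_of_pos_of_lt hpos hlt
  refine ⟨⟨A.card - 1, by omega⟩, (∑ a ∈ A, a) / A.card, A, ?_, ?_, hcut⟩
  · simp only; omega
  · simp only [Nat.sub_add_cancel hpos, mul_div_cancel₀ _ hcard]

end CutRegion

/-- Labelling each point by a region that contains its `ε`-ball, for a Lebesgue number `ε` of the
cover, forces nearby points of the same colour to lie in a common region. -/
lemma exists_equivariant_labelling {E J : Type*} [PseudoMetricSpace E] [Nonempty J] {p : ℕ}
    {K : Set E} (hK : IsCompact K) {s : E ≃ᵢ E} (hsK : Set.MapsTo s K K)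
    {U : J → ZMod p → Set E} (hopen : ∀ j g, IsOpen (U j g)) (hcover : ∀ x ∈ K, ∃ j g, x ∈ U j g)
    (hphase : ∀ j g g' x, x ∈ U j g → x ∈ U j g' → g = g')
    (hsU : ∀ j g x, s x ∈ U j (g + 1) ↔ x ∈ U j g) :
    ∃ ε > 0, ∃ lam : E → J × ZMod p, (∀ x ∈ K, lam (s x) = labelShift (lam x)) ∧
      ∀ x y, IsNear K ε x y → Consistent (lam x) (lam y) := by
  obtain ⟨ε, hε, hball⟩ := lebesgue_number_lemma_of_metric (c := fun q : J × ZMod p => U q.1 q.2)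
    hK (fun q => hopen q.1 q.2) (fun x hx => by simpa using hcover x hx)
  have hshift (x j g) : Metric.ball (s x) ε ⊆ U j (g + 1) ↔ Metric.ball x ε ⊆ U j g := by
    rw [← s.image_ball, Set.image_subset_iff]
    exact forall₂_congr fun y _ => hsU j g y
  let colour (x : E) : J := Classical.epsilon fun j => ∃ g, Metric.ball x ε ⊆ U j g
  let phase (x : E) : ZMod p := Classical.epsilon fun g => Metric.ball x ε ⊆ U (colour x) g
  have hspec (x) (hx : x ∈ K) : Metric.ball x ε ⊆ U (colour x) (phase x) := by
    have hex : ∃ j g, Metric.ball x ε ⊆ U j g := by simpa using hball x hx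
    exact Classical.epsilon_spec (p := fun g => Metric.ball x ε ⊆ U (colour x) g)
      (Classical.epsilon_spec (p := fun j => ∃ g, Metric.ball x ε ⊆ U j g) hex)
  have hcolour (x : E) : colour (s x) = colour x := by
    have hiff (j) : (∃ g, Metric.ball (s x) ε ⊆ U j g) ↔ ∃ g, Metric.ball x ε ⊆ U j g :=
      (Equiv.addRight (1 : ZMod p)).surjective.exists.trans (exists_congr (hshift x j))
    simp only [colour, hiff]
  refine ⟨ε, hε, fun x => (colour x, phase x), fun x hx => Prod.ext (hcolour x) ?_, ?_⟩
  · refine hphase (colour x) _ _ (s x) ?_ ((hsU _ _ _).2 (hspec x hx (Metric.mem_ball_self hε)))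
    exact hcolour x ▸ hspec (s x) (hsK hx) (Metric.mem_ball_self hε)
  · rintro x y ⟨hx, hy, hxy⟩ hcol
    have hmem := hspec x hx (Metric.mem_ball'.2 hxy)
    rw [show colour x = colour y from hcol] at hmem
    exact Prod.ext hcol (hphase _ _ _ y hmem (hspec y hy (Metric.mem_ball_self hε)))

end Labelling

section BorsukUlam

variable {E : Type*} {p : ℕ}

/-- The values of `F` on the orbit of `x` under a map `s` of period `p`. The sign of the index is
chosen so that replacing `x` by `s x` shifts superlevel sets by `+1`. -/
def orbitProfile (s : E → E) (F : E → ℝ) (x : E) : ZMod p → ℝ :=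
  fun a => F (s^[(-a).val] x)

lemma orbitProfile_apply [NeZero p] {s : E → E} (hsp : s^[p] = id) (F : E → ℝ) (x : E) :
    orbitProfile (p := p) s F (s x) = orbitProfile s F x ∘ (· - 1) := by
  funext a
  simp only [orbitProfile, Function.comp_apply, neg_sub', sub_neg_eq_add]
  rw [apply_val_add_one (G := fun m => s^[m] x) (by simp [hsp]), Function.iterate_succ_apply]

lemma orbitProfile_neg_natCast {s : E → E} (hsp : s^[p] = id) (F : E → ℝ) (x : E) (i : ℕ) :
    orbitProfile (p := p) s F x (-i) = F (s^[i] x) := by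
  have hper : Function.IsPeriodicPt s p x := congrFun hsp x
  rw [orbitProfile, neg_neg, ZMod.val_natCast, hper.iterate_mod_apply]

variable [PseudoMetricSpace E] {X : ℕ → Set E}

/-- A Borsuk–Ulam theorem for actions of `ℤ/p`. -/
theorem exists_forall_iterate_eq [Fact p.Prime] (hodd : Odd p) {T : Type*} [Fintype T]
    {s : E ≃ᵢ E} (hsp : s^[p] = id)
    (hX : IsContractibleFiltration s X (Fintype.card T * (p - 1))) {F : T → E → ℝ}
    (hF : ∀ t, Continuous (F t)) :
    ∃ x ∈ X (Fintype.card T * (p - 1)), ∀ t (i : ℕ), F t (s^[i] x) = F t x := by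
  by_contra! hne
  obtain ⟨x₀, hx₀⟩ := hX.nonempty
  obtain ⟨t₀, -⟩ := hne x₀ (hX.subset (Nat.zero_le _) hx₀)
  have hp : p.Prime := Fact.out
  have : Nonempty (T × Fin (p - 1)) := ⟨t₀, 0, Nat.sub_pos_of_lt hp.one_lt⟩
  have hcard : Fintype.card T * (p - 1) = Fintype.card (T × Fin (p - 1)) := by simp
  rw [hcard] at hX hne
  have hunit (i : Fin (p - 1)) : ((i + 1 : ℕ) : ZMod p) ≠ 0 := by
    rw [Ne, ZMod.natCast_eq_zero_iff]
    exact Nat.not_dvd_of_pos_of_lt (Nat.succ_pos _) (Nat.add_lt_of_lt_sub i.isLt)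
  let U (j : T × Fin (p - 1)) (g : ZMod p) : Set E :=
    orbitProfile s (F j.1) ⁻¹' cutRegion (j.2 + 1) g
  have hcont (t : T) : Continuous (orbitProfile (p := p) s (F t)) :=
    continuous_pi fun a => (hF t).comp (s.continuous.iterate _)
  obtain ⟨ε, hε, lam, hlam, hcons⟩ := exists_equivariant_labelling (U := U)
    (hX.isCompact _ le_rfl) (hX.mapsTo _ le_rfl)
    (fun j g => (isOpen_cutRegion _ g).preimage (hcont j.1))
    (fun x hx => by
      obtain ⟨t, i, hti⟩ := hne x hx
      obtain ⟨k, g, hkg⟩ := exists_mem_cutRegion (f := orbitProfile (p := p) s (F t) x)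
        (a := -i) (b := -(0 : ℕ)) (by
          rwa [orbitProfile_neg_natCast hsp, orbitProfile_neg_natCast hsp])
      exact ⟨(t, k), g, hkg⟩)
    (fun j g g' x hg hg' => eq_of_mem_cutRegion (hunit j.2) hg hg')
    (fun j g x => by
      simp only [U, Set.mem_preimage, orbitProfile_apply hsp, comp_sub_one_mem_cutRegion])
  obtain ⟨x, y, hxy, hnot⟩ := exists_near_not_consistent hp.one_lt hodd s.isometry hsp hX hlam hε
  exact hnot (hcons x y hxy)

end BorsukUlam

section Configurations

lemma ContractsInto.of_segment_subset {E : Type*} [AddCommGroup E] [Module ℝ E]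
    [TopologicalSpace E] [IsTopologicalAddGroup E] [ContinuousSMul ℝ E] {X Y : Set E} {e : E}
    (he : e ∈ Y) (hXY : ∀ x ∈ X, segment ℝ x e ⊆ Y) : ContractsInto X Y := by
  refine ⟨fun q => AffineMap.lineMap q.2 e q.1, e, he, ?_, ?_, fun x _ => by simp⟩
  · simp only [AffineMap.lineMap_apply_module]
    fun_prop
  · rintro ⟨r, x⟩ ⟨hr, hx⟩
    exact hXY x hx (segment_eq_image_lineMap ℝ x e ▸ Set.mem_image_of_mem _ hr)

lemma isClosed_setOf_ncard_support_le {K : Type*} [Finite K] (m : ℕ) :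
    IsClosed {f : K → ℝ | (Function.support f).ncard ≤ m} := by
  simp only [← isOpen_compl_iff, Set.compl_ofPred, not_le, isOpen_iff_mem_nhds]
  intro f hf
  have hsub : ∀ᶠ g in nhds f, ∀ k ∈ Function.support f, g k ≠ 0 :=
    (Filter.eventually_all_finite (Set.toFinite _)).2 fun k hk =>
      (continuous_apply k).continuousAt.eventually_ne hk
  filter_upwards [hsub] with g hg
  exact hf.trans_le (Set.ncard_le_ncard hg)

variable {K : Type*} [Fintype K] {d m n : ℕ}

/-- A subcomplex of the join of `d` copies of the full simplex on `K`, in barycentric coordinates: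
faces have at most `m` vertices in each factor, and `n + 1` vertices are allowed in total,
exhausting the factors one after the other. -/
def joinSkeleton (K : Type*) [Fintype K] (d m n : ℕ) : Set (K × Fin d → ℝ) :=
  {z ∈ stdSimplex ℝ (K × Fin d) |
    ∀ j, (Function.support fun k => z (k, j)).ncard ≤ min m (n + 1 - j * m)}

lemma isCompact_joinSkeleton : IsCompact (joinSkeleton K d m n) := by
  have hclosed (j : Fin d) : IsClosed {z : K × Fin d → ℝ |
      (Function.support fun k => z (k, j)).ncard ≤ min m (n + 1 - j * m)} :=
    (isClosed_setOf_ncard_support_le _).preimage (f := fun (z : K × Fin d → ℝ) k => z (k, j))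
      (by fun_prop)
  convert (isCompact_stdSimplex ℝ (K × Fin d)).inter_right (isClosed_iInter hclosed) using 1
  ext z
  simp [joinSkeleton]

lemma comp_prodMap_mem_joinSkeleton (e : K ≃ K) {z : K × Fin d → ℝ}
    (hz : z ∈ joinSkeleton K d m n) : z ∘ Prod.map e id ∈ joinSkeleton K d m n := by
  refine ⟨⟨fun q => hz.1.1 _, ?_⟩, fun j => ?_⟩
  · exact ((e.prodCongr (Equiv.refl _)).sum_comp z).trans hz.1.2
  · refine le_trans (le_of_eq ?_) (hz.2 j)
    exact Set.ncard_preimage_of_injective_subset_range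
      (s := Function.support fun k => z (k, j)) e.injective (by simp)

lemma support_slice_single {K : Type*} [DecidableEq K] (k : K) (j j' : Fin d) :
    (Function.support fun l => (Pi.single (k, j) 1 : K × Fin d → ℝ) (l, j')) =
      if j' = j then {k} else ∅ := by
  ext l
  split_ifs <;> simp_all [Pi.single_apply]

lemma single_mem_joinSkeleton [DecidableEq K] (hm : 0 < m) (k : K) {j : Fin d} (hj : j * m ≤ n) :
    Pi.single (k, j) 1 ∈ joinSkeleton K d m n := by
  refine ⟨single_mem_stdSimplex ℝ _, fun j' => ?_⟩
  rw [support_slice_single]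
  split_ifs with h
  · subst h
    rw [Set.ncard_singleton]
    omega
  · simp

lemma segment_single_subset_joinSkeleton [DecidableEq K] {z : K × Fin d → ℝ}
    (hz : z ∈ joinSkeleton K d m n) (k : K) {j : Fin d} (hm : 0 < m) (hj : (n + 1) / m = j) :
    segment ℝ z (Pi.single (k, j) 1) ⊆ joinSkeleton K d m (n + 1) := by
  rintro - ⟨a, b, ha, hb, hab, rfl⟩
  refine ⟨convex_stdSimplex ℝ _ hz.1 (single_mem_stdSimplex ℝ _) ha hb hab, fun j' => ?_⟩
  have hsupp :
      (Function.support fun l => (a • z + b • Pi.single (k, j) 1 : K × Fin d → ℝ) (l, j')) ⊆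
        Function.support (fun l => z (l, j')) ∪ if j' = j then {k} else ∅ := by
    rw [← support_slice_single]
    intro l hl
    by_contra hnot
    simp_all
  have hzj := hz.2 j'
  have hdiv := Nat.div_add_mod' (n + 1) m
  have hmod := Nat.mod_lt (n + 1) hm
  rw [hj] at hdiv
  refine (Set.ncard_le_ncard hsupp).trans ?_
  split_ifs with h
  · subst h
    rw [Set.union_singleton]
    have := Set.ncard_insert_le k (Function.support fun l => z (l, j'))
    omega
  · rw [Set.union_empty]
    omega

lemma joinSkeleton_contractsInto [Nonempty K] (hm : 0 < m) (hn : n + 1 < d * m) :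
    ContractsInto (joinSkeleton K d m n) (joinSkeleton K d m (n + 1)) := by
  classical
  obtain ⟨k⟩ := ‹Nonempty K›
  let j : Fin d := ⟨(n + 1) / m, Nat.div_lt_of_lt_mul (by rwa [mul_comm])⟩
  exact .of_segment_subset (single_mem_joinSkeleton hm k (Nat.div_mul_le_self _ _) (j := j))
    fun z hz => segment_single_subset_joinSkeleton hz k hm rfl

lemma exists_ne_of_mem_joinSkeleton (hm : m < Fintype.card K) {z : K × Fin d → ℝ}
    (hz : z ∈ joinSkeleton K d m n) : ∃ k l j, z (k, j) ≠ z (l, j) := by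
  by_contra! hconst
  have hzero (k j) : z (k, j) = 0 := by
    by_contra hne
    have huniv : (Function.support fun l => z (l, j)) = Set.univ :=
      Set.eq_univ_of_forall fun l => (hconst l k j).trans_ne hne
    have hcard := hz.2 j
    rw [huniv, Set.ncard_univ, Nat.card_eq_fintype_card] at hcard
    omega
  simpa [fun q : K × Fin d => hzero q.1 q.2] using hz.1.2

/-- The isometry that shifts the first index of a configuration cyclically. -/
def cyclicShift (p d : ℕ) [NeZero p] : (ZMod p × Fin d → ℝ) ≃ᵢ (ZMod p × Fin d → ℝ) :=
  IsometryEquiv.piCongrLeft' (Y := fun _ => ℝ) ((Equiv.subRight 1).prodCongr (Equiv.refl _))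

lemma cyclicShift_iterate {p : ℕ} [NeZero p] (i : ℕ) (z : ZMod p × Fin d → ℝ) :
    (cyclicShift p d)^[i] z = z ∘ Prod.map (· + (i : ZMod p)) id := by
  induction i with
  | zero => ext ⟨k, j⟩; simp
  | succ i ih =>
    rw [Function.iterate_succ_apply', ih]
    ext ⟨k, j⟩
    change z (k + 1 + i, j) = z (k + (i + 1 : ℕ), j)
    rw [Nat.cast_succ, add_assoc, add_comm 1]

lemma isContractibleFiltration_joinSkeleton {p N : ℕ} [NeZero p] (hm : 0 < m) (hN : N < d * m) :
    IsContractibleFiltration (cyclicShift p d) (joinSkeleton (ZMod p) d m) N where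
  nonempty := ⟨Pi.single (0, ⟨0, pos_of_mul_pos_left (N.zero_le.trans_lt hN) m.zero_le⟩) 1,
    single_mem_joinSkeleton hm _ (by simp)⟩
  isCompact _ _ := isCompact_joinSkeleton
  mapsTo _ _ _ hz := by
    rw [← Function.iterate_one (cyclicShift p d), cyclicShift_iterate]
    exact comp_prodMap_mem_joinSkeleton (Equiv.addRight _) hz
  contractsInto n hn := joinSkeleton_contractsInto hm (by omega)

end Configurations

section Polygons

lemma IsMetricEquivToStd.continuous {E : Type*} [TopologicalSpace E] {ρ : E → E → ℝ}
    (h : IsMetricEquivToStd ρ) : Continuous (Function.uncurry ρ) := by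
  obtain ⟨hsymm, hzero, htri, hopen⟩ := h
  let := PseudoMetricSpace.ofDistTopology ρ (fun x => (hzero x x).2 rfl) hsymm htri hopen
  exact continuous_dist

lemma apply_eq_of_periodic {p : ℕ} [Fact p.Prime] {V : Type*} {x : ZMod p → V}
    {c : ZMod p} (hx : Function.Periodic x c) (hc : c ≠ 0) (k : ZMod p) : x k = x 0 := by
  rw [← hx.nat_mul_eq (k / c).val, ZMod.natCast_zmod_val, div_mul_cancel₀ _ hc]

/-- If two vertices coincide, then so do the endpoints of an edge of some `C_t`; as `C_t` is
equilateral and visits all vertices, they all coincide. -/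
lemma injective_of_equilateral {p : ℕ} [Fact p.Prime] (hodd : Odd p) {V : Type*}
    {ρ : ℕ → V → V → ℝ}
    (hρ : ∀ t, 1 ≤ t → t ≤ (p - 1) / 2 → ∀ u v, ρ t u v = 0 ↔ u = v) {x : ZMod p → V}
    (hx : ∀ t : ℕ, 1 ≤ t → t ≤ (p - 1) / 2 → ∀ a : ZMod p,
      ρ t (x a) (x (a + t)) = ρ t (x 0) (x t))
    {k l : ZMod p} (hkl : x k ≠ x l) : Function.Injective x := by
  intro i j hij
  by_contra hne
  have hdiff : j - i ≠ 0 := sub_ne_zero.2 (Ne.symm hne)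
  set t := (j - i).valMinAbs.natAbs with ht
  have ht1 : 1 ≤ t := Int.natAbs_pos.2 ((ZMod.valMinAbs_eq_zero _).not.2 hdiff)
  have ht2 : t ≤ (p - 1) / 2 := by
    have hle := ZMod.natAbs_valMinAbs_le (j - i)
    obtain ⟨m, hm⟩ := hodd
    omega
  have hcast : (t : ZMod p) = j - i ∨ (t : ZMod p) = i - j := by
    rw [ht, ZMod.natCast_natAbs_valMinAbs]
    split_ifs <;> simp
  have hcast0 : (t : ZMod p) ≠ 0 := by
    rcases hcast with h | h <;> rw [h]
    exacts [hdiff, sub_ne_zero.2 hne]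
  obtain ⟨a, ha⟩ : ∃ a, x a = x (a + t) := by
    rcases hcast with h | h <;> rw [h]
    exacts [⟨i, by rw [add_sub_cancel, hij]⟩, ⟨j, by rw [add_sub_cancel, hij]⟩]
  have hper : Function.Periodic x t := fun b =>
    ((hρ t ht1 ht2 _ _).1 (by rw [hx t ht1 ht2 b, ← hx t ht1 ht2 a, (hρ t ht1 ht2 _ _).2 ha])).symm
  exact hkl ((apply_eq_of_periodic hper hcast0 k).trans (apply_eq_of_periodic hper hcast0 l).symm)

variable {V : Type*} [AddCommGroup V] [Module ℝ V] [TopologicalSpace V]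
  [ContinuousAdd V] [ContinuousSMul ℝ V]

theorem exists_ne_forall_shift_eq {p : ℕ} [Fact p.Prime] (hodd : Odd p) {T : Type*} [Fintype T]
    (hV : Fintype.card T < Module.rank ℝ V) {F : T → (ZMod p → V) → ℝ}
    (hF : ∀ t, Continuous (F t)) :
    ∃ x : ZMod p → V, (∃ k l, x k ≠ x l) ∧ ∀ t a, F t (fun k => x (k + a)) = F t x := by
  have hp : 0 < p - 1 := Nat.sub_pos_of_lt (Fact.out : p.Prime).one_lt
  obtain ⟨f, hf⟩ := Module.le_rank_iff_exists_linearMap.1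
    ((Nat.cast_succ _).trans_le (Cardinal.add_one_le_of_lt hV))
  have hf' := f.continuous_on_pi
  obtain ⟨z, hz, heq⟩ := exists_forall_iterate_eq hodd (s := cyclicShift p (Fintype.card T + 1))
    (F := fun t z => F t fun k => f fun j => z (k, j))
    (funext fun z => by ext ⟨k, j⟩; simp [cyclicShift_iterate])
    (isContractibleFiltration_joinSkeleton hp (Nat.mul_lt_mul_of_pos_right (Nat.lt_succ_self _) hp))
    (fun t => (hF t).comp (by fun_prop))
  obtain ⟨k, l, j, hne⟩ := exists_ne_of_mem_joinSkeleton
    ((Nat.pred_lt_self (Nat.pos_of_neZero p)).trans_eq (ZMod.card p).symm) hz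
  refine ⟨fun k => f fun j => z (k, j), ⟨k, l, fun h => hne (congrFun (hf h) j)⟩, fun t a => ?_⟩
  simpa [cyclicShift_iterate] using heq t a.val

theorem exists_pgons_each_equilateral_general (p : ℕ) (hp : p.Prime) (hodd : Odd p)
    (hV : ((p - 1) / 2 : ℕ) < Module.rank ℝ V) (ρ : ℕ → V → V → ℝ)
    (hcont : ∀ t, 1 ≤ t → t ≤ (p - 1) / 2 → Continuous (Function.uncurry (ρ t)))
    (hzero : ∀ t, 1 ≤ t → t ≤ (p - 1) / 2 → ∀ u v, ρ t u v = 0 ↔ u = v) :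
    ∃ x : ZMod p → V, Function.Injective x ∧
      ∀ t : ℕ, 1 ≤ t → t ≤ (p - 1) / 2 → ∀ k : ZMod p,
        ρ t (x (k * t)) (x ((k + 1) * t)) = ρ t (x 0) (x t) := by
  have := Fact.mk hp
  obtain ⟨x, ⟨k, l, hkl⟩, hx⟩ := exists_ne_forall_shift_eq (V := V) hodd
    (F := fun (t : Fin ((p - 1) / 2)) x => ρ (t + 1) (x 0) (x (t + 1 : ℕ))) (by simpa using hV)
    (fun t => (hcont (t + 1) (by omega) (by omega)).comp
      (f := fun x : ZMod p → V => (x 0, x (t + 1 : ℕ))) (by fun_prop))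
  have hedge (t : ℕ) (ht1 : 1 ≤ t) (ht2 : t ≤ (p - 1) / 2) (a : ZMod p) :
      ρ t (x a) (x (a + t)) = ρ t (x 0) (x t) := by
    obtain ⟨t, rfl⟩ := Nat.exists_eq_add_of_le' ht1
    simpa [add_comm a] using hx ⟨t, ht2⟩ a
  refine ⟨x, injective_of_equilateral hodd hzero hedge hkl, fun t ht1 ht2 k => ?_⟩
  rw [add_one_mul, hedge t ht1 ht2]

end Polygons

/-- Corollary: for `d > (p-1)/2` and metrics `ρ₁, …, ρ_{(p-1)/2}` equivalent to the
Euclidean metric, there are `p` distinct points such that each `p`-gon `C_t` is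
`ρ_t`-equilateral. -/
theorem exists_pgons_each_equilateral
    (p d : ℕ) (hp : p.Prime) (hodd : Odd p) (hd : 0 < d) (hdr : d > (p - 1) / 2)
    (ρ : ℕ → EuclideanSpace ℝ (Fin d) → EuclideanSpace ℝ (Fin d) → ℝ)
    (hρ : ∀ t, 1 ≤ t → t ≤ (p - 1) / 2 → IsMetricEquivToStd (ρ t)) :
    ∃ x : ZMod p → EuclideanSpace ℝ (Fin d),
      Function.Injective x ∧
      ∀ t : ℕ, 1 ≤ t → t ≤ (p - 1) / 2 →
        ∀ k : ZMod p,
          ρ t (x (k * (t : ZMod p))) (x ((k + 1) * (t : ZMod p))) =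
            ρ t (x 0) (x (t : ZMod p)) :=
  exists_pgons_each_equilateral_general p hp hodd
    (by rw [← Module.finrank_eq_rank]; simpa using hdr) ρ
    (fun t h1 h2 => (hρ t h1 h2).continuous) fun t h1 h2 => (hρ t h1 h2).2.1
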